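/- Let Φ, B, S ∈ M(ℂ^n) be density matrices and τ ≥ 0, δ ≥ 0, r ≥ 1. Assume ‖B − Φ‖_∞ ≤ 2τ and ‖S − Φ‖₂ ≤ ‖B − Φ‖₂, and assume that Φ is δ-almost rank r. Then ‖S − Φ‖₁ ≤ r ( (4√2 + 2)δ + 4√2 · τ ). -/

import Mathlib

noncomputable section
open Matrix Kronecker BigOperators
open scoped ComplexOrder

/-- The Frobenius (Hilbert–Schmidt) norm `‖A‖₂ = √Tr(AᴴA)` of a complex matrix. -/
def frobNorm {n : Type*} [Fintype n] (A : Matrix n n ℂ) : ℝ :=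
  Real.sqrt (Matrix.trace (Aᴴ * A)).re

/-- The operator norm `‖A‖_∞` (largest singular value) of a complex matrix. -/
def opNorm {n : Type*} [Fintype n] [DecidableEq n] (A : Matrix n n ℂ) : ℝ :=
  ‖Matrix.toEuclideanCLM (𝕜 := ℂ) A‖

/-- The positive semidefinite square root of a positive semidefinite matrix. -/
def Matrix.PosSemidef.sqrt {n 𝕜 : Type*} [Fintype n] [RCLike 𝕜] [DecidableEq n]
    {A : Matrix n n 𝕜} (hA : A.PosSemidef) : Matrix n n 𝕜 :=
  hA.1.eigenvectorUnitary.1 * diagonal ((↑) ∘ Real.sqrt ∘ hA.1.eigenvalues) *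
  (star hA.1.eigenvectorUnitary : Matrix n n 𝕜)

/-- The trace norm `‖A‖₁ = Tr √(AᴴA)` of a complex matrix. -/
def traceNorm {n : Type*} [Fintype n] [DecidableEq n] (A : Matrix n n ℂ) : ℝ :=
  ((Matrix.posSemidef_conjTranspose_mul_self A).sqrt).trace.re

/-- A density matrix: positive semidefinite with trace one. -/
def IsDensity {n : Type*} [Fintype n] (ρ : Matrix n n ℂ) : Prop :=
  ρ.PosSemidef ∧ ρ.trace = 1

/-- A density matrix `ρ` is `δ`-almost rank `r` if there is a density matrix of rank at most `r`
within operator-norm distance `δ` of it. -/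
def AlmostRank {n : Type*} [Fintype n] [DecidableEq n] (r : ℕ) (δ : ℝ) (ρ : Matrix n n ℂ) : Prop :=
  ∃ σ : Matrix n n ℂ, IsDensity σ ∧ σ.rank ≤ r ∧ opNorm (ρ - σ) ≤ δ

/-- The rank-one (outer-product) matrix `|v⟩⟨v|`. -/
def outer {n : Type*} (v : EuclideanSpace ℂ n) : Matrix n n ℂ :=
  Matrix.of fun i j => v i * (starRingEnd ℂ) (v j)

/-- Partial trace over the first tensor factor. -/
def ptrace1 {d : ℕ} (X : Matrix (Fin d × Fin d) (Fin d × Fin d) ℂ) : Matrix (Fin d) (Fin d) ℂ :=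
  Matrix.of fun j j' => ∑ i, X (i, j) (i, j')

/-- Partial trace over the second tensor factor. -/
def ptrace2 {d : ℕ} (X : Matrix (Fin d × Fin d) (Fin d × Fin d) ℂ) : Matrix (Fin d) (Fin d) ℂ :=
  Matrix.of fun i i' => ∑ j, X (i, j) (i', j)

/-- A family of `m` rank-one projectors, each given by a unit vector. -/
def IsRankOneProjFamily {d m : ℕ} (P : Fin m → Matrix (Fin d) (Fin d) ℂ) : Prop :=
  ∀ l, ∃ v : EuclideanSpace ℂ (Fin d), ‖v‖ = 1 ∧ P l = outer v

/-- Near-isotropy: `∑ l, Tr(P l · A) • P l = A + Tr(A) • 𝟙` for every `A`. -/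
def NearIsotropic {d m : ℕ} (P : Fin m → Matrix (Fin d) (Fin d) ℂ) : Prop :=
  ∀ A : Matrix (Fin d) (Fin d) ℂ,
    ∑ l, Matrix.trace (P l * A) • P l = A + Matrix.trace A • (1 : Matrix (Fin d) (Fin d) ℂ)

/-- Spectral data of a matrix. -/
def Spec {n : Type*} [Fintype n] [DecidableEq n] (H U : Matrix n n ℂ) (l : n → ℝ) : Prop :=
  Uᴴ * U = 1 ∧ U * Uᴴ = 1 ∧ H = U * diagonal (fun i => (l i : ℂ)) * Uᴴ

section helpers
variable {n : Type*} [Fintype n] [DecidableEq n]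

lemma exists_spec {H : Matrix n n ℂ} (hH : H.IsHermitian) : ∃ U l, Spec H U l := by
  refine ⟨hH.eigenvectorUnitary.1, hH.eigenvalues, ?_, ?_, ?_⟩
  · exact Unitary.coe_star_mul_self hH.eigenvectorUnitary
  · exact Unitary.coe_mul_star_self hH.eigenvectorUnitary
  · have := hH.spectral_theorem
    rw [Unitary.conjStarAlgAut_apply] at this
    exact this

lemma spec_trace {H U : Matrix n n ℂ} {l : n → ℝ} (h : Spec H U l) :
    H.trace = ∑ i, (l i : ℂ) := by
  rw [h.2.2, trace_mul_comm, ← mul_assoc, h.1, one_mul, trace_diagonal]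

lemma spec_sq {H U : Matrix n n ℂ} {l : n → ℝ} (h : Spec H U l) :
    Spec (Hᴴ * H) U (fun i => l i ^ 2) := by
  refine ⟨h.1, h.2.1, ?_⟩
  have h1 : Hᴴ = U * diagonal (fun i => (l i : ℂ)) * Uᴴ := by
    rw [h.2.2]
    simp only [conjTranspose_mul, conjTranspose_conjTranspose, diagonal_conjTranspose, mul_assoc]
    congr 3
    ext i
    simp
  rw [h1]
  conv_lhs => rw [h.2.2]
  calc U * diagonal (fun i => (l i : ℂ)) * Uᴴ * (U * diagonal (fun i => (l i : ℂ)) * Uᴴ)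
      = U * diagonal (fun i => (l i : ℂ)) * (Uᴴ * U) * diagonal (fun i => (l i : ℂ)) * Uᴴ := by
        simp only [mul_assoc]
    _ = _ := by
        rw [h.1, mul_one, mul_assoc U, diagonal_mul_diagonal]
        congr 3
        ext i
        push_cast
        ring

lemma spec_roots {H U : Matrix n n ℂ} {l : n → ℝ} (h : Spec H U l) :
    H.charpoly.roots = Multiset.map (fun i => (l i : ℂ)) Finset.univ.val := by
  have : H.charpoly = (diagonal (fun i => (l i : ℂ))).charpoly := by
    rw [h.2.2, charpoly_mul_comm, ← mul_assoc, h.1, one_mul]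
  rw [this, charpoly_diagonal, Polynomial.roots_prod]
  · simp
  · simp [Finset.prod_ne_zero_iff, Polynomial.X_sub_C_ne_zero]

lemma traceNorm_spec {H U : Matrix n n ℂ} {l : n → ℝ} (h : Spec H U l) :
    traceNorm H = ∑ i, |l i| := by
  have hA := (Matrix.posSemidef_conjTranspose_mul_self H).1
  have h1 : traceNorm H = ∑ i, Real.sqrt (hA.eigenvalues i) := by
    unfold traceNorm Matrix.PosSemidef.sqrt
    rw [trace_mul_comm, ← mul_assoc, Unitary.coe_star_mul_self, one_mul, trace_diagonal]
    simp
  have h2 := hA.roots_charpoly_eq_eigenvalues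
  rw [spec_roots (spec_sq h)] at h2
  have h3 := congrArg (fun s => (Multiset.map (fun z : ℂ => Real.sqrt z.re) s).sum) h2
  simp only [Multiset.map_map] at h3
  rw [h1]
  have h4 : ∑ i, Real.sqrt ((l i)^2) = ∑ i, Real.sqrt (hA.eigenvalues i) := by
    exact h3
  rw [← h4]
  simp [Real.sqrt_sq_eq_abs]

lemma traceNorm_spec0 {H U : Matrix n n ℂ} {l : n → ℝ} (h : Spec H U l) (h0 : H.trace = 0) :
    traceNorm H / 2 = ∑ i, max (l i) 0 := by
  rw [traceNorm_spec h]
  have h1 : ∑ i, l i = 0 := by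
    have := spec_trace h
    rw [h0] at this
    exact_mod_cast this.symm
  have : ∑ i, |l i| = 2 * ∑ i, max (l i) 0 - ∑ i, l i := by
    rw [Finset.mul_sum, ← Finset.sum_sub_distrib]
    refine Finset.sum_congr rfl fun i _ => ?_
    rcases le_total (l i) 0 with h | h
    · rw [abs_of_nonpos h, max_eq_right h]; ring
    · rw [abs_of_nonneg h, max_eq_left h]; ring
  linarith

lemma traceNorm_neg' (H : Matrix n n ℂ) : traceNorm (-H) = traceNorm H := by
  have : (-H)ᴴ * (-H) = Hᴴ * H := by simp
  unfold traceNorm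
  congr 3

lemma frobNorm_sq (H : Matrix n n ℂ) : frobNorm H ^ 2 = (trace (Hᴴ * H)).re := by
  unfold frobNorm
  rw [Real.sq_sqrt]
  exact (Complex.nonneg_iff.mp (posSemidef_conjTranspose_mul_self H).trace_nonneg).1

lemma re_trace_nonneg {m : Type*} [Fintype m] {A : Matrix m m ℂ} (h : A.PosSemidef) :
    0 ≤ A.trace.re :=
  (Complex.nonneg_iff.mp h.trace_nonneg).1

lemma re_trace_le {H : Matrix n n ℂ} (hH : H.IsHermitian) (h0 : H.trace = 0)
    {m : Type*} [Fintype m] [DecidableEq m] (L : Matrix n m ℂ) (hL : Lᴴ * L = 1) :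
    (trace (Lᴴ * H * L)).re ≤ traceNorm H / 2 := by
  obtain ⟨U, l, h⟩ := exists_spec hH
  rw [traceNorm_spec0 h h0]
  set P : Matrix n n ℂ := U * diagonal (fun i => ((max (l i) 0 : ℝ) : ℂ)) * Uᴴ with hP
  have hPs : Spec P U (fun i => max (l i) 0) := ⟨h.1, h.2.1, hP⟩
  have hPp : P.PosSemidef := by
    apply PosSemidef.mul_mul_conjTranspose_same
    apply PosSemidef.diagonal
    intro i
    simp only [Pi.zero_apply]
    exact_mod_cast le_max_right _ _
  have hPH : (P - H).PosSemidef := by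
    have : P - H = U * diagonal (fun i => ((max (l i) 0 - l i : ℝ) : ℂ)) * Uᴴ := by
      rw [hP]; conv_lhs => rw [h.2.2]
      rw [← sub_mul, ← mul_sub, diagonal_sub]
      congr 3
      ext i
      push_cast
      rfl
    rw [this]
    apply PosSemidef.mul_mul_conjTranspose_same
    apply PosSemidef.diagonal
    intro i
    simp only [Pi.zero_apply]
    exact_mod_cast sub_nonneg.mpr (le_max_left _ _)
  have e1 := re_trace_nonneg (hPH.conjTranspose_mul_mul_same L)
  set M : Matrix n n ℂ := 1 - L * Lᴴ with hM
  have hMH : Mᴴ = M := by simp [hM]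
  have hMM : M * M = M := by
    have : L * Lᴴ * (L * Lᴴ) = L * Lᴴ := by
      rw [Matrix.mul_assoc, ← Matrix.mul_assoc Lᴴ, hL, Matrix.one_mul]
    rw [hM, sub_mul, mul_sub, mul_sub, this]; simp
  have e2 := re_trace_nonneg (hPp.conjTranspose_mul_mul_same M)
  have e3 : trace (Mᴴ * P * M) = trace P - trace (Lᴴ * P * L) := by
    rw [hMH, mul_assoc, trace_mul_comm, mul_assoc, hMM, hM, mul_sub, mul_one, trace_sub,
      ← Matrix.mul_assoc, trace_mul_comm (P * L), ← Matrix.mul_assoc]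
  have e4 := spec_trace hPs
  rw [e3, e4, Complex.sub_re] at e2
  rw [Matrix.mul_sub, Matrix.sub_mul, trace_sub, Complex.sub_re] at e1
  have e5 : (∑ i, ((max (l i) 0 : ℝ) : ℂ)).re = ∑ i, max (l i) 0 := by
    rw [← Complex.ofReal_sum, Complex.ofReal_re]
  linarith

lemma exists_pos {H : Matrix n n ℂ} (hH : H.IsHermitian) (h0 : H.trace = 0) :
    ∃ (p : n → Prop) (_ : DecidablePred p) (K : Matrix n {i // p i} ℂ),
      Kᴴ * K = 1 ∧ (Kᴴ * H * K).PosDef ∧ (trace (Kᴴ * H * K)).re = traceNorm H / 2 := by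
  obtain ⟨U, l, h⟩ := exists_spec hH
  rw [traceNorm_spec0 h h0]
  have hd : Uᴴ * H * U = diagonal (fun i => (l i : ℂ)) := by
    rw [h.2.2]
    calc _ = (Uᴴ * U) * diagonal (fun i => (l i : ℂ)) * (Uᴴ * U) := by simp only [mul_assoc]
      _ = _ := by rw [h.1]; simp
  have hK : ∀ A : Matrix n n ℂ, (U.submatrix id (Subtype.val : {i // 0 < l i} → n))ᴴ * A *
      U.submatrix id (Subtype.val : {i // 0 < l i} → n) =
      (Uᴴ * A * U).submatrix Subtype.val Subtype.val := by
    intro A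
    ext i j
    simp [Matrix.mul_apply]
  refine ⟨fun i => 0 < l i, Classical.decPred _, U.submatrix id Subtype.val, ?_, ?_, ?_⟩
  · have := hK 1
    rw [Matrix.mul_one, Matrix.mul_one, h.1] at this
    rw [this]
    ext i j
    simp [Matrix.one_apply, Subtype.ext_iff]
  · rw [hK, hd]
    have : (diagonal (fun i => (l i : ℂ))).submatrix (Subtype.val : {i // 0 < l i} → n)
        Subtype.val = diagonal (fun i : {i // 0 < l i} => (l i.1 : ℂ)) := by
      ext i j
      simp [Matrix.diagonal_apply, Subtype.ext_iff]
    rw [this]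
    apply PosDef.diagonal
    intro i
    exact_mod_cast i.2
  · rw [hK, hd]
    simp only [trace, diag, submatrix_apply, diagonal_apply_eq]
    rw [← Complex.ofReal_sum, Complex.ofReal_re]
    have := Finset.sum_subtype_eq_sum_filter (s := Finset.univ) (fun i => l i) (p := fun i => 0 < l i)
    rw [Finset.subtype_univ] at this
    refine Eq.trans ?_ (this.trans ?_)
    · exact Finset.sum_congr (by ext; simp) fun _ _ => rfl
    rw [Finset.sum_filter]
    refine Finset.sum_congr rfl fun i _ => ?_
    split_ifs with hi
    · rw [max_eq_left hi.le]
    · rw [max_eq_right (not_lt.mp hi)]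

lemma card_le_rank {σ X : Matrix n n ℂ} (hX : X.PosSemidef)
    {m : Type*} [Fintype m] [DecidableEq m] (K : Matrix n m ℂ)
    (hK : (Kᴴ * (σ - X) * K).PosDef) : Fintype.card m ≤ σ.rank := by
  have h1 : (Kᴴ * σ * K).PosDef := by
    have : Kᴴ * σ * K = Kᴴ * (σ - X) * K + Kᴴ * X * K := by
      rw [Matrix.mul_sub, Matrix.sub_mul]; abel
    rw [this]
    exact hK.add_posSemidef (hX.conjTranspose_mul_mul_same K)
  rw [← rank_of_isUnit _ h1.isUnit]
  exact (rank_mul_le_left _ _).trans (rank_mul_le_right _ _)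

lemma re_entry_le (H : Matrix n n ℂ) {m : Type*} [Fintype m] [DecidableEq m] (K : Matrix n m ℂ)
    (hK : Kᴴ * K = 1) (i : m) : |((Kᴴ * H * K) i i).re| ≤ opNorm H := by
  set v : EuclideanSpace ℂ n := WithLp.toLp 2 (fun j => K j i) with hv
  have hn : ‖v‖ = 1 := by
    have h1 := congrFun (congrFun hK i) i
    rw [Matrix.mul_apply, Matrix.one_apply_eq] at h1
    have h2 : inner ℂ v v = (1 : ℂ) := by
      rw [← h1, PiLp.inner_apply]
      refine Finset.sum_congr rfl fun j _ => ?_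
      simp [hv, Complex.mul_conj', mul_comm]
    rw [inner_self_eq_norm_sq_to_K] at h2
    have h3 : ‖v‖ ^ 2 = 1 := by
      have h4 : ((‖v‖ ^ 2 : ℝ) : ℂ) = 1 := by push_cast; exact h2
      exact_mod_cast h4
    nlinarith [norm_nonneg v]
  have he : (Kᴴ * H * K) i i = inner ℂ v (toEuclideanCLM (𝕜 := ℂ) H v) := by
    rw [hv, toEuclideanCLM_toLp, PiLp.inner_apply, Matrix.mul_assoc, Matrix.mul_apply]
    refine Finset.sum_congr rfl fun j _ => ?_
    simp [Matrix.mul_apply, Matrix.mulVec, dotProduct, mul_comm]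
  rw [he]
  calc _ ≤ ‖inner ℂ v (toEuclideanCLM (𝕜 := ℂ) H v)‖ := Complex.abs_re_le_norm _
    _ ≤ ‖v‖ * ‖toEuclideanCLM (𝕜 := ℂ) H v‖ := norm_inner_le_norm _ _
    _ ≤ ‖v‖ * (‖toEuclideanCLM (𝕜 := ℂ) H‖ * ‖v‖) := by
        gcongr; exact ContinuousLinearMap.le_opNorm _ _
    _ = opNorm H := by rw [hn]; simp [opNorm]

lemma re_trace_le_op (H : Matrix n n ℂ) {m : Type*} [Fintype m] [DecidableEq m]
    (K : Matrix n m ℂ) (hK : Kᴴ * K = 1) :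
    (trace (Kᴴ * H * K)).re ≤ Fintype.card m * opNorm H := by
  simp only [trace, diag, Complex.re_sum]
  calc _ ≤ ∑ i : m, opNorm H :=
        Finset.sum_le_sum fun i _ => (le_abs_self _).trans (re_entry_le H K hK i)
    _ = _ := by simp

lemma re_trace_le_frob {H : Matrix n n ℂ} (hH : H.IsHermitian) {m : Type*} [Fintype m]
    [DecidableEq m] (K : Matrix n m ℂ) (hK : Kᴴ * K = 1) :
    (trace (Kᴴ * H * K)).re ≤ Real.sqrt (Fintype.card m) * frobNorm H := by
  have hf : 0 ≤ frobNorm H := Real.sqrt_nonneg _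
  have key : ∀ t : ℝ, 0 ≤ frobNorm H ^ 2 - 2 * t * (trace (Kᴴ * H * K)).re
      + t ^ 2 * Fintype.card m := by
    intro t
    have h1 := re_trace_nonneg (posSemidef_conjTranspose_mul_self (H - (t : ℂ) • (K * Kᴴ)))
    have hKK : K * Kᴴ * (K * Kᴴ) = K * Kᴴ := by
      rw [Matrix.mul_assoc, ← Matrix.mul_assoc Kᴴ, hK, Matrix.one_mul]
    have hx : trace (H * (K * Kᴴ)) = trace (Kᴴ * H * K) := by
      rw [← Matrix.mul_assoc, trace_mul_comm (H * K), ← Matrix.mul_assoc]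
    have hy : trace (K * Kᴴ * H) = trace (Kᴴ * H * K) := by
      rw [trace_mul_comm, hx]
    have hz : trace (K * Kᴴ) = Fintype.card m := by
      rw [trace_mul_comm, hK, trace_one]
    have h2 : trace ((H - (t : ℂ) • (K * Kᴴ))ᴴ * (H - (t : ℂ) • (K * Kᴴ))) =
        trace (Hᴴ * H) - ((2 * t : ℝ) : ℂ) * trace (Kᴴ * H * K)
          + ((t ^ 2 : ℝ) : ℂ) * Fintype.card m := by
      have : (H - (t : ℂ) • (K * Kᴴ))ᴴ = H - (t : ℂ) • (K * Kᴴ) := by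
        simp [hH.eq]
      rw [this, hH.eq, sub_mul, mul_sub, mul_sub]
      simp only [Matrix.smul_mul, Matrix.mul_smul, trace_sub, trace_smul, hKK, hx, hy, hz,
        smul_eq_mul]
      push_cast
      ring
    rw [h2, Complex.add_re, Complex.sub_re, Complex.re_ofReal_mul, Complex.re_ofReal_mul,
      ← frobNorm_sq, Complex.natCast_re] at h1
    exact h1
  set x := (trace (Kᴴ * H * K)).re
  rw [← Real.sqrt_sq hf, ← Real.sqrt_mul (by positivity)]
  apply Real.le_sqrt_of_sq_le
  rcases Nat.eq_zero_or_pos (Fintype.card m) with h | h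
  · rw [h] at key ⊢
    simp only [Nat.cast_zero, mul_zero, add_zero, zero_mul] at key ⊢
    by_contra hx
    have hx0 : x ≠ 0 := by rintro h; simp [h] at hx
    have := key ((frobNorm H ^ 2 + 1) / (2 * x))
    field_simp at this
    linarith
  · have hc : (0 : ℝ) < Fintype.card m := by exact_mod_cast h
    have := key (x / Fintype.card m)
    have e : frobNorm H ^ 2 - 2 * (x / Fintype.card m) * x
        + (x / Fintype.card m) ^ 2 * Fintype.card m = frobNorm H ^ 2 - x ^ 2 / Fintype.card m := by
      field_simp; ring
    rw [e, sub_nonneg, div_le_iff₀ hc] at this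
    linarith

lemma frob_sq_le {H : Matrix n n ℂ} (hH : H.IsHermitian) :
    frobNorm H ^ 2 ≤ opNorm H * traceNorm H := by
  obtain ⟨U, l, h⟩ := exists_spec hH
  have hd : Uᴴ * H * U = diagonal (fun i => (l i : ℂ)) := by
    rw [h.2.2]
    calc _ = (Uᴴ * U) * diagonal (fun i => (l i : ℂ)) * (Uᴴ * U) := by simp only [mul_assoc]
      _ = _ := by rw [h.1]; simp
  rw [frobNorm_sq, spec_trace (spec_sq h), traceNorm_spec h, ← Complex.ofReal_sum,
    Complex.ofReal_re, Finset.mul_sum]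
  refine Finset.sum_le_sum fun i _ => ?_
  have := re_entry_le H U h.1 i
  rw [hd, diagonal_apply_eq, Complex.ofReal_re] at this
  rw [← sq_abs, sq]
  gcongr

lemma traceNorm_le_op {σ X : Matrix n n ℂ} (hσ : IsDensity σ) (hX : IsDensity X) {r : ℕ}
    (hr : σ.rank ≤ r) : traceNorm (σ - X) / 2 ≤ r * opNorm (σ - X) := by
  have h0 : (σ - X).trace = 0 := by rw [trace_sub, hσ.2, hX.2, sub_self]
  obtain ⟨p, _, K, hK, hp, ht⟩ := exists_pos (hσ.1.1.sub hX.1.1) h0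
  have hc := card_le_rank hX.1 K hp
  rw [← ht]
  refine (re_trace_le_op _ K hK).trans ?_
  have : 0 ≤ opNorm (σ - X) := norm_nonneg _
  gcongr
  exact hc.trans hr

lemma traceNorm_tri {A B C : Matrix n n ℂ} (hA : IsDensity A) (hB : IsDensity B)
    (hC : IsDensity C) : traceNorm (A - C) / 2 ≤ traceNorm (A - B) / 2 + traceNorm (B - C) / 2 := by
  have h0 : ∀ {X Y : Matrix n n ℂ}, IsDensity X → IsDensity Y → (X - Y).trace = 0 := by
    intro X Y h h'; rw [trace_sub, h.2, h'.2, sub_self]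
  obtain ⟨p, _, K, hK, hp, ht⟩ := exists_pos (hA.1.1.sub hC.1.1) (h0 hA hC)
  rw [← ht]
  have e : A - C = (A - B) + (B - C) := by abel
  rw [e, Matrix.mul_add, Matrix.add_mul, trace_add, Complex.add_re]
  exact add_le_add (re_trace_le (hA.1.1.sub hB.1.1) (h0 hA hB) K hK)
    (re_trace_le (hB.1.1.sub hC.1.1) (h0 hB hC) K hK)

lemma opNorm_sub_comm (A B : Matrix n n ℂ) : opNorm (A - B) = opNorm (B - A) := by
  unfold opNorm; rw [map_sub, map_sub, norm_sub_rev]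

lemma opNorm_tri (A B C : Matrix n n ℂ) : opNorm (A - C) ≤ opNorm (A - B) + opNorm (B - C) := by
  unfold opNorm; simp only [map_sub]; exact norm_sub_le_norm_sub_add_norm_sub _ _ _

end helpers

/-- deterministic trace-norm content of Theorem 4, eq. (49): if `Φ, B, S` are
density matrices, `‖B − Φ‖_∞ ≤ 2τ`, `‖S − Φ‖₂ ≤ ‖B − Φ‖₂`, and the true state `Φ` is `δ`-almost
rank `r`, then `‖S − Φ‖₁ ≤ r((4√2 + 2)δ + 4√2 τ)`. -/
theorem pls_traceNorm_deterministic_bound_true_state (n : ℕ)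
    (Φ B S : Matrix (Fin n) (Fin n) ℂ)
    (hΦ : IsDensity Φ) (hB : IsDensity B) (hS : IsDensity S)
    (τ δ : ℝ) (r : ℕ) (hτ : 0 ≤ τ) (hδ : 0 ≤ δ) (hr : 1 ≤ r)
    (h₁ : opNorm (B - Φ) ≤ 2 * τ)
    (h₂ : frobNorm (S - Φ) ≤ frobNorm (B - Φ))
    (h₃ : AlmostRank r δ Φ) :
    traceNorm (S - Φ) ≤ r * ((4 * Real.sqrt 2 + 2) * δ + 4 * Real.sqrt 2 * τ) := by
  obtain ⟨σ, hσ, hrk, hop⟩ := h₃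
  have hr0 : (0 : ℝ) ≤ r := by positivity
  have hopσ : opNorm (σ - Φ) ≤ δ := by rw [opNorm_sub_comm]; exact hop
  have hneg : ∀ X Y : Matrix (Fin n) (Fin n) ℂ, traceNorm (X - Y) = traceNorm (Y - X) := by
    intro X Y; rw [← traceNorm_neg', neg_sub]
  have a1 : traceNorm (Φ - σ) / 2 ≤ r * δ := by
    rw [hneg]
    exact (traceNorm_le_op hσ hΦ hrk).trans (by gcongr)
  have a2 : traceNorm (σ - B) / 2 ≤ r * (δ + 2 * τ) := by
    refine (traceNorm_le_op hσ hB hrk).trans ?_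
    gcongr
    refine (opNorm_tri σ Φ B).trans ?_
    rw [opNorm_sub_comm Φ B]
    gcongr
  have a3 := traceNorm_tri hΦ hσ hB
  have a4 : frobNorm (B - Φ) ^ 2 ≤ 2 * τ * (4 * r * (δ + τ)) := by
    refine (frob_sq_le (hB.1.1.sub hΦ.1.1)).trans ?_
    have h0 : 0 ≤ opNorm (B - Φ) := norm_nonneg _
    apply mul_le_mul h₁ _ _ (by positivity)
    · rw [hneg]; nlinarith
    · obtain ⟨U, l, h⟩ := exists_spec (hB.1.1.sub hΦ.1.1)
      rw [traceNorm_spec h]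
      positivity
  have a5 : frobNorm (Φ - S) ≤ Real.sqrt r * (Real.sqrt 2 * (2 * τ + δ)) := by
    have e : frobNorm (Φ - S) = frobNorm (S - Φ) := by
      unfold frobNorm
      rw [← neg_sub S Φ, conjTranspose_neg, neg_mul_neg]
    rw [e]
    refine h₂.trans ?_
    apply le_of_sq_le_sq _ (by positivity)
    rw [mul_pow, mul_pow, Real.sq_sqrt hr0, Real.sq_sqrt (by norm_num)]
    nlinarith [mul_nonneg hr0 (sq_nonneg δ)]
  have a6 : traceNorm (σ - S) / 2 ≤ r * δ + r * (Real.sqrt 2 * (2 * τ + δ)) := by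
    have h0 : (σ - S).trace = 0 := by rw [trace_sub, hσ.2, hS.2, sub_self]
    obtain ⟨p, _, K, hK, hp, ht⟩ := exists_pos (hσ.1.1.sub hS.1.1) h0
    have hc : (Fintype.card {i // p i} : ℝ) ≤ r := by
      exact_mod_cast (card_le_rank hS.1 K hp).trans hrk
    rw [← ht]
    have e : σ - S = (σ - Φ) + (Φ - S) := by abel
    rw [e, Matrix.mul_add, Matrix.add_mul, trace_add, Complex.add_re]
    have b1 := re_trace_le_op (σ - Φ) K hK
    have b2 := re_trace_le_frob (hΦ.1.1.sub hS.1.1) K hK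
    have b3 : (Fintype.card {i // p i} : ℝ) * opNorm (σ - Φ) ≤ r * δ :=
      mul_le_mul hc hopσ (norm_nonneg _) hr0
    have b4 : Real.sqrt (Fintype.card {i // p i}) * frobNorm (Φ - S) ≤
        Real.sqrt r * (Real.sqrt r * (Real.sqrt 2 * (2 * τ + δ))) :=
      mul_le_mul (Real.sqrt_le_sqrt hc) a5 (Real.sqrt_nonneg _) (Real.sqrt_nonneg _)
    rw [← mul_assoc, Real.mul_self_sqrt hr0] at b4
    linarith
  have a7 := traceNorm_tri hΦ hσ hS
  rw [hneg Φ S] at a7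
  have h2 : (1 : ℝ) ≤ Real.sqrt 2 := by
    rw [Real.one_le_sqrt]; norm_num
  nlinarith [mul_nonneg (mul_nonneg hr0 hδ) (sub_nonneg.mpr h2)]
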